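/- Let σ act on (ℂ^×)⁴ by σ(z, w, u, v) = (conj(w), conj(z), conj(v), conj(u)), and let N = {(z, w, u, v) ∈ (ℂ^×)⁴ : z·w = 1 and u·v = 1}, a σ-stable subgroup. Let Δ = {(t, t, t⁻¹, t⁻¹) : t ∈ ℂ^×}, a σ-stable subgroup of (ℂ^×)⁴, and let P = (ℂ^×)⁴/Δ with the induced automorphism σ̄. Then the composite map H¹(σ, N) → H¹(σ̄, P) induced by the inclusion N ⊆ (ℂ^×)⁴ followed by the projection to P is trivial: for every n ∈ N with n·σ(n) = 1 there exists q ∈ (ℂ^×)⁴ such that n·(q·σ(q)⁻¹)⁻¹ ∈ Δ. -/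

import Mathlib

noncomputable section

/-- Complex conjugation on `ℂˣ`. -/
def conjUnits : ℂˣ →* ℂˣ := Units.map (starRingEnd ℂ)

/-- The Galois action `σ(z, w, u, v) = (conj w, conj z, conj v, conj u)` on `(ℂˣ)⁴`. -/
def sigma4 (x : ℂˣ × ℂˣ × ℂˣ × ℂˣ) : ℂˣ × ℂˣ × ℂˣ × ℂˣ :=
  (conjUnits x.2.1, conjUnits x.1, conjUnits x.2.2.2, conjUnits x.2.2.1)

/-- The subgroup `N = {(z,w,u,v) : zw = 1 and uv = 1}` of `(ℂˣ)⁴`, as a set. -/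
def Nset : Set (ℂˣ × ℂˣ × ℂˣ × ℂˣ) :=
  {x | x.1 * x.2.1 = 1 ∧ x.2.2.1 * x.2.2.2 = 1}

/-- The subgroup `Δ = {(t, t, t⁻¹, t⁻¹) : t ∈ ℂˣ}`, as a set. -/
def deltaSet : Set (ℂˣ × ℂˣ × ℂˣ × ℂˣ) :=
  {x | ∃ t : ℂˣ, x = (t, t, t⁻¹, t⁻¹)}

/-- The composite map `H¹(σ, N) → H¹(σ̄, P)`, where `P = (ℂˣ)⁴/Δ`, is
trivial: every `σ`-cocycle of `N` becomes a boundary modulo `Δ`. -/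
theorem stmt_4 :
    ∀ n : ℂˣ × ℂˣ × ℂˣ × ℂˣ, n ∈ Nset → n * sigma4 n = 1 →
      ∃ q : ℂˣ × ℂˣ × ℂˣ × ℂˣ, n * (q * (sigma4 q)⁻¹)⁻¹ ∈ deltaSet := by
  rintro ⟨z, w, u, v⟩ _ h
  simp only [sigma4, Prod.mk_mul_mk, Prod.mk_eq_one] at h
  obtain ⟨-, h2, -, h4⟩ := h
  refine ⟨(z, 1, u, 1), 1, ?_⟩
  simp [sigma4, h2, h4]
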